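/- Let R, B, S be finite-valued random variables on a probability space with negative interaction information I(R;B;S) < 0, and let C_RB, C_RS, C_BS be real numbers (causal strengths) satisfying the Janzing–Balduzzi–Grosse-Wentrup–Schölkopf inequalities C_RB = I(R;B), C_RS ≥ I(R;S|B), and C_BS ≥ I(B;S|R). If min{C_RB, C_RS, C_BS} < |I(R;B;S)|, then C_RB < |I(R;B;S)|, while C_RS ≥ |I(R;B;S)| and C_BS ≥ |I(R;B;S)|; that is, only the causal influence from the root variable to the bridge variable is weak. -/

import Mathlib

open MeasureTheory

/-- Shannon entropy of a finite-valued random variable `X` under the measure `μ`,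
with the convention `0 * log 0 = 0` (note `Real.log 0 = 0` in Mathlib). -/
noncomputable def entropy {Ω α : Type*} [MeasurableSpace Ω] [Fintype α]
    (μ : Measure Ω) (X : Ω → α) : ℝ :=
  - ∑ x : α, (μ (X ⁻¹' {x})).toReal * Real.log (μ (X ⁻¹' {x})).toReal

/-- Mutual information `I(X;Y) = H(X) + H(Y) - H(X,Y)` of finite-valued random variables. -/
noncomputable def mutualInfo {Ω α β : Type*} [MeasurableSpace Ω] [Fintype α] [Fintype β]
    (μ : Measure Ω) (X : Ω → α) (Y : Ω → β) : ℝ :=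
  entropy μ X + entropy μ Y - entropy μ (fun ω => (X ω, Y ω))

/-- Conditional mutual information
`I(X;Y|Z) = H(X,Z) + H(Y,Z) - H(X,Y,Z) - H(Z)` of finite-valued random variables. -/
noncomputable def condMutualInfo {Ω α β γ : Type*} [MeasurableSpace Ω]
    [Fintype α] [Fintype β] [Fintype γ]
    (μ : Measure Ω) (X : Ω → α) (Y : Ω → β) (Z : Ω → γ) : ℝ :=
  entropy μ (fun ω => (X ω, Z ω)) + entropy μ (fun ω => (Y ω, Z ω))
    - entropy μ (fun ω => (X ω, Y ω, Z ω)) - entropy μ Z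

/-- Interaction information `I(X;Y;Z) = I(X;Y) - I(X;Y|Z)`. -/
noncomputable def interactionInfo {Ω α β γ : Type*} [MeasurableSpace Ω]
    [Fintype α] [Fintype β] [Fintype γ]
    (μ : Measure Ω) (X : Ω → α) (Y : Ω → β) (Z : Ω → γ) : ℝ :=
  mutualInfo μ X Y - condMutualInfo μ X Y Z

lemma aux_entropy_equiv {Ω α β : Type*} [MeasurableSpace Ω] [Fintype α] [Fintype β]
    (μ : Measure Ω) (X : Ω → α) (e : α ≃ β) :
    entropy μ (fun ω => e (X ω)) = entropy μ X := by
  unfold entropy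
  congr 1
  rw [← Equiv.sum_comp e]
  refine Finset.sum_congr rfl fun x _ => ?_
  have : (fun ω => e (X ω)) ⁻¹' {e x} = X ⁻¹' {x} := by
    ext ω; simp
  rw [this]

lemma aux_marginal {Ω β : Type*} [MeasurableSpace Ω]
    [Fintype β] [MeasurableSpace β] [MeasurableSingletonClass β]
    (μ : Measure Ω) [IsProbabilityMeasure μ] (A : Set Ω) (hA : MeasurableSet A)
    (Y : Ω → β) (hY : Measurable Y) :
    (μ A).toReal = ∑ y, (μ (A ∩ Y ⁻¹' {y})).toReal := by
  rw [← ENNReal.toReal_sum (fun _ _ => measure_ne_top _ _)]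
  congr 1
  rw [← measure_biUnion_finset]
  · congr 1
    ext ω; simp
  · intro y _ z _ hyz
    refine Set.disjoint_left.2 ?_
    rintro ω ⟨_, h1⟩ ⟨_, h2⟩
    simp only [Set.mem_preimage, Set.mem_singleton_iff] at h1 h2
    exact hyz (h1.symm.trans h2)
  · intro y _
    exact hA.inter (hY (measurableSet_singleton y))

lemma aux_term {p a b : ℝ} (hp : 0 ≤ p) (ha : p ≤ a) (hb : p ≤ b) :
    p - a * b ≤ p * Real.log p - p * Real.log a - p * Real.log b := by
  rcases hp.eq_or_lt with h | h
  · subst h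
    have := mul_nonneg ha hb
    simpa using this
  · have ha' := h.trans_le ha
    have hb' := h.trans_le hb
    have h1 := Real.log_le_sub_one_of_pos (div_pos (mul_pos ha' hb') h)
    rw [Real.log_div (mul_pos ha' hb').ne' h.ne', Real.log_mul ha'.ne' hb'.ne'] at h1
    have h2 := mul_le_mul_of_nonneg_left h1 h.le
    have h3 : p * (a * b / p - 1) = a * b - p := by field_simp
    rw [h3] at h2
    linarith

lemma aux_real {α β : Type*} [Fintype α] [Fintype β] (p : α → β → ℝ) (a : α → ℝ) (b : β → ℝ)
    (hp : ∀ x y, 0 ≤ p x y) (ha : ∀ x, a x = ∑ y, p x y) (hb : ∀ y, b y = ∑ x, p x y)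
    (h1 : ∑ x, a x = 1) :
    ∑ x, a x * Real.log (a x) + ∑ y, b y * Real.log (b y)
      ≤ ∑ x, ∑ y, p x y * Real.log (p x y) := by
  have hb1 : ∑ y, b y = 1 := by
    rw [← h1]; simp only [ha, hb]; exact Finset.sum_comm
  have key : ∑ x, ∑ y, (p x y - a x * b y) ≤
      ∑ x, ∑ y, (p x y * Real.log (p x y) - p x y * Real.log (a x) - p x y * Real.log (b y)) := by
    refine Finset.sum_le_sum fun x _ => Finset.sum_le_sum fun y _ => aux_term (hp x y) ?_ ?_
    · rw [ha]
      exact Finset.single_le_sum (f := fun y => p x y) (fun i _ => hp x i) (Finset.mem_univ y)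
    · rw [hb]
      exact Finset.single_le_sum (f := fun x => p x y) (fun i _ => hp i y) (Finset.mem_univ x)
  have e1 : ∑ x, ∑ y, p x y * Real.log (a x) = ∑ x, a x * Real.log (a x) := by
    refine Finset.sum_congr rfl fun x _ => ?_
    rw [← Finset.sum_mul, ← ha]
  have e2 : ∑ x, ∑ y, p x y * Real.log (b y) = ∑ y, b y * Real.log (b y) := by
    rw [Finset.sum_comm]
    refine Finset.sum_congr rfl fun y _ => ?_
    rw [← Finset.sum_mul, ← hb]
  have e3 : ∑ x, ∑ y, p x y = 1 := by
    rw [← h1]; simp only [ha]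
  have e4 : ∑ x, ∑ y, a x * b y = 1 := by
    simp only [← Finset.mul_sum, hb1, mul_one, h1]
  simp only [Finset.sum_sub_distrib] at key
  rw [e1, e2, e3, e4] at key
  linarith

lemma aux_mutualInfo_nonneg {Ω α β : Type*} [MeasurableSpace Ω]
    [Fintype α] [MeasurableSpace α] [MeasurableSingletonClass α]
    [Fintype β] [MeasurableSpace β] [MeasurableSingletonClass β]
    (μ : Measure Ω) [IsProbabilityMeasure μ]
    (X : Ω → α) (Y : Ω → β) (hX : Measurable X) (hY : Measurable Y) :
    0 ≤ mutualInfo μ X Y := by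
  have hpre : ∀ x y, (fun ω => (X ω, Y ω)) ⁻¹' {(x, y)} = X ⁻¹' {x} ∩ Y ⁻¹' {y} := by
    intro x y; ext ω; simp
  have := aux_real (fun x y => (μ (X ⁻¹' {x} ∩ Y ⁻¹' {y})).toReal)
    (fun x => (μ (X ⁻¹' {x})).toReal) (fun y => (μ (Y ⁻¹' {y})).toReal)
    (fun _ _ => ENNReal.toReal_nonneg)
    (fun x => aux_marginal μ _ (hX (measurableSet_singleton x)) Y hY)
    (fun y => by
      simp only [Set.inter_comm _ (Y ⁻¹' {y})]
      exact aux_marginal μ _ (hY (measurableSet_singleton y)) X hX)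
    (by
      have := aux_marginal μ Set.univ MeasurableSet.univ X hX
      simpa using this.symm)
  unfold mutualInfo entropy
  rw [Fintype.sum_prod_type]
  simp only [hpre]
  linarith

/-- in a triangle DAG with negative interaction information, if the
weakest causal strength is below `|I(R;B;S)|`, then only the root-to-bridge
influence is weak. -/
theorem only_root_to_bridge_weak {Ω α β γ : Type*} [MeasurableSpace Ω]
    [Fintype α] [MeasurableSpace α] [MeasurableSingletonClass α]
    [Fintype β] [MeasurableSpace β] [MeasurableSingletonClass β]
    [Fintype γ] [MeasurableSpace γ] [MeasurableSingletonClass γ]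
    (μ : MeasureTheory.Measure Ω) [MeasureTheory.IsProbabilityMeasure μ]
    (R : Ω → α) (B : Ω → β) (S : Ω → γ)
    (hR : Measurable R) (hB : Measurable B) (hS : Measurable S)
    (hneg : interactionInfo μ R B S < 0)
    (C_RB C_RS C_BS : ℝ)
    (hRB : C_RB = mutualInfo μ R B)
    (hRS : C_RS ≥ condMutualInfo μ R S B)
    (hBS : C_BS ≥ condMutualInfo μ B S R)
    (hmin : min C_RB (min C_RS C_BS) < |interactionInfo μ R B S|) :
    C_RB < |interactionInfo μ R B S|
    ∧ C_RS ≥ |interactionInfo μ R B S|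
    ∧ C_BS ≥ |interactionInfo μ R B S| := by
  have n1 := aux_mutualInfo_nonneg μ R S hR hS
  have n2 := aux_mutualInfo_nonneg μ B S hB hS
  have p1 : entropy μ (fun ω => (S ω, B ω)) = entropy μ (fun ω => (B ω, S ω)) :=
    aux_entropy_equiv μ (fun ω => (B ω, S ω)) (Equiv.prodComm β γ)
  have p2 : entropy μ (fun ω => (B ω, R ω)) = entropy μ (fun ω => (R ω, B ω)) :=
    aux_entropy_equiv μ (fun ω => (R ω, B ω)) (Equiv.prodComm α β)
  have p3 : entropy μ (fun ω => (S ω, R ω)) = entropy μ (fun ω => (R ω, S ω)) :=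
    aux_entropy_equiv μ (fun ω => (R ω, S ω)) (Equiv.prodComm α γ)
  have p4 : entropy μ (fun ω => (R ω, S ω, B ω)) = entropy μ (fun ω => (R ω, B ω, S ω)) :=
    aux_entropy_equiv μ (fun ω => (R ω, B ω, S ω))
      ((Equiv.refl α).prodCongr (Equiv.prodComm β γ))
  have p5 : entropy μ (fun ω => (B ω, S ω, R ω)) = entropy μ (fun ω => (R ω, B ω, S ω)) :=
    aux_entropy_equiv μ (fun ω => (R ω, B ω, S ω))
      ((Equiv.prodComm α (β × γ)).trans (Equiv.prodAssoc β γ α))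
  have k1 : C_RS ≥ |interactionInfo μ R B S| := by
    rw [abs_of_neg hneg]
    unfold interactionInfo
    unfold mutualInfo condMutualInfo at *
    linarith
  have k2 : C_BS ≥ |interactionInfo μ R B S| := by
    rw [abs_of_neg hneg]
    unfold interactionInfo
    unfold mutualInfo condMutualInfo at *
    linarith
  refine ⟨?_, k1, k2⟩
  rcases min_lt_iff.1 hmin with h | h
  · exact h
  · exact absurd h (not_lt.2 (le_min k1 k2))
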